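/- Let A be a unital *-algebra over ℂ, q ∈ (0,1), and z₁, z₂, z₃, z₄ ∈ A elements satisfying the Vaksman–Soibelman S_q^7 relations. Then the 4×4 matrix P₁ over A given by rows (q⁴z₁*z₁, q³z₁*z₂*, q²z₁*z₃*, q²z₁*z₄), (q³z₂z₁, q²z₂z₂*, qz₂z₃*, qz₂z₄), (q²z₃z₁, qz₃z₂*, z₃z₃*, z₃z₄), (q²z₄*z₁, qz₄*z₂*, z₄*z₃*, z₄*z₄) is a projection: P₁² = P₁ and P₁* = P₁. -/

import Mathlib

/-- The Vaksman–Soibelman `S_q^7` relations for a 4-tuple of elements of a unital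
complex *-algebra. -/
def VSRel {A : Type*} [Ring A] [StarRing A] [Algebra ℂ A] (q : ℝ) (z : Fin 4 → A) : Prop :=
  (∀ i j : Fin 4, i < j → z i * z j = (q : ℂ) • (z j * z i)) ∧
  (∀ i j : Fin 4, i ≠ j → star (z j) * z i = (q : ℂ) • (z i * star (z j))) ∧
  (∀ k : Fin 4, star (z k) * z k
      = z k * star (z k) + (1 - (q : ℂ) ^ 2) • ∑ j ∈ Finset.Iio k, z j * star (z j)) ∧
  ∑ k : Fin 4, z k * star (z k) = 1

/-!
`P₁` is the rank-one matrix `v v*` of the column `v = (q² z₁*, q z₂, z₃, z₄*)`, hence a projection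
as soon as `v* v = 1`. Since `z₁` is normal, `v* v = q⁴ z₁* z₁ + q² z₂* z₂ + z₃* z₃ + z₄ z₄*`, and
the relations for `zₖ* zₖ` telescope to `∑_{k ≤ m} q^{2(m-k)} zₖ* zₖ = ∑_{k ≤ m} zₖ zₖ*`, here with
`m = 3`.

There is no `StarModule ℂ A` instance, so the identity `(q • x)* = q • x*` behind `P₁ = v v*` has to
be extracted from the relations. The elements `x` satisfying it form a two-sided *-ideal, which
contains `zᵢ zⱼ*` for `i ≠ j`. Multiplying `z₄* z₄ = q² z₄ z₄* + (1 - q²)` on the left by `zᵢ` with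
`i < 4` shows that it contains `(1 - q²) zᵢ`, hence also `zᵢ`: if `q² = 1`, the identity is trivial.
-/

/-- The `StarModule` law for a self-adjoint scalar `c`, imposed at the single element `x`. It stands
in for a `StarModule` instance. -/
def StarSMulCommAt {R A : Type*} [SMul R A] [Star A] (c : R) (x : A) : Prop :=
  star (c • x) = c • star x

namespace StarSMulCommAt

section Algebra

variable {R A : Type*} [CommSemiring R] [Semiring A] [StarRing A] [Algebra R A] {c : R} {x : A}

theorem mul_left (hx : StarSMulCommAt c x) (y : A) : StarSMulCommAt c (y * x) := by
  rw [StarSMulCommAt, ← mul_smul_comm, star_mul, hx, smul_mul_assoc, star_mul]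

theorem mul_right (hx : StarSMulCommAt c x) (y : A) : StarSMulCommAt c (x * y) := by
  rw [StarSMulCommAt, ← smul_mul_assoc, star_mul, hx, mul_smul_comm, star_mul]

protected theorem smul (hx : StarSMulCommAt c x) (d : R) : StarSMulCommAt c (d • x) := by
  simpa only [Algebra.smul_def] using hx.mul_left (algebraMap R A d)

protected theorem star (hx : StarSMulCommAt c x) : StarSMulCommAt c (star x) := by
  rw [StarSMulCommAt, star_star, ← hx, star_star]

protected theorem pow (hx : StarSMulCommAt c x) (n : ℕ) : StarSMulCommAt (c ^ n) x := by
  induction n with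
  | zero => simp [StarSMulCommAt]
  | succ n ih => rw [StarSMulCommAt, pow_succ', mul_smul, hx.smul, ih, mul_smul]

end Algebra

protected theorem sub {R A : Type*} [AddGroup A] [StarAddMonoid A] [DistribSMul R A] {c : R}
    {x y : A} (hx : StarSMulCommAt c x) (hy : StarSMulCommAt c y) : StarSMulCommAt c (x - y) := by
  rw [StarSMulCommAt, smul_sub, star_sub, hx, hy, star_sub, smul_sub]

theorem of_one_sub_sq_smul {K A : Type*} [Field K] [Ring A] [StarRing A] [Algebra K A] {c : K}
    {x : A} (hx : StarSMulCommAt c ((1 - c ^ 2) • x)) : StarSMulCommAt c x := by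
  by_cases hc : 1 - c ^ 2 = 0
  · rcases sq_eq_one_iff.mp (sub_eq_zero.mp hc).symm with rfl | rfl <;>
      simp [StarSMulCommAt]
  · rw [← inv_smul_smul₀ hc x]
    exact hx.smul _

end StarSMulCommAt

theorem sum_Iio_last {M : Type*} [AddCommMonoid M] {n : ℕ} (f : Fin (n + 1) → M) :
    ∑ j ∈ Finset.Iio (Fin.last n), f j = ∑ j : Fin n, f j.castSucc := by
  simp [Fin.Iio_last_eq_map]

theorem sum_pow_rev_smul_eq_sum {R M : Type*} [Ring R] [AddCommGroup M] [Module R M] (t : R)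
    {n : ℕ} {x y : Fin n → M} (hy : ∀ k, y k = x k + (1 - t) • ∑ j ∈ Finset.Iio k, x j) :
    ∑ k, t ^ (k.rev : ℕ) • y k = ∑ k, x k := by
  induction n with
  | zero => simp
  | succ n ih =>
    have init_sum : ∑ k : Fin n, t ^ (k.rev : ℕ) • y k.castSucc = ∑ k : Fin n, x k.castSucc :=
      ih fun k => by rw [hy, Fin.sum_Iio_castSucc]
    have last_eq : y (Fin.last n) = x (Fin.last n) + (1 - t) • ∑ k : Fin n, x k.castSucc := by
      rw [hy, sum_Iio_last]
    simp only [Fin.sum_univ_castSucc, Fin.rev_castSucc, Fin.val_succ, pow_succ', mul_smul,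
      ← Finset.smul_sum, init_sum, Fin.rev_last, Fin.val_zero, pow_zero, one_smul, last_eq,
      sub_smul]
    abel

theorem isStarProjection_vecMulVec_star {n A : Type*} [Fintype n] [Semiring A] [StarRing A]
    {v : n → A} (hv : star v ⬝ᵥ v = 1) : IsStarProjection (Matrix.vecMulVec v (star v)) where
  isIdempotentElem := by
    rw [IsIdempotentElem, Matrix.vecMulVec_mul_vecMulVec, hv, one_smul]
  isSelfAdjoint := by
    rw [IsSelfAdjoint, Matrix.star_eq_conjTranspose, Matrix.conjTranspose_vecMulVec, star_star]

section ProjectionColumn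

variable {R A : Type*} [CommSemiring R] [Semiring A] [StarRing A] [Algebra R A] {c : R}
  {z : Fin 4 → A}

/-- The column `v` with `P₁ = v v*`, where `c` plays the role of `q`. -/
def projectionColumn (c : R) (z : Fin 4 → A) : Fin 4 → A :=
  ![c ^ 2 • star (z 0), c • z 1, z 2, star (z 3)]

theorem star_projectionColumn (h₀ : StarSMulCommAt c (z 0)) (h₁ : StarSMulCommAt c (z 1)) :
    star (projectionColumn c z) = ![c ^ 2 • z 0, c • star (z 1), star (z 2), z 3] := by
  have star_entry_zero : star (c ^ 2 • star (z 0)) = c ^ 2 • z 0 := by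
    rw [h₀.star.pow 2, star_star]
  have star_entry_one : star (c • z 1) = c • star (z 1) := h₁
  ext i
  fin_cases i <;> simp [projectionColumn, star_entry_zero, star_entry_one]

theorem star_projectionColumn_dotProduct_self (h₀ : StarSMulCommAt c (z 0))
    (h₁ : StarSMulCommAt c (z 1)) :
    star (projectionColumn c z) ⬝ᵥ projectionColumn c z =
      c ^ 4 • (z 0 * star (z 0)) + c ^ 2 • (star (z 1) * z 1) + star (z 2) * z 2 +
        z 3 * star (z 3) := by
  rw [star_projectionColumn h₀ h₁]
  simp [projectionColumn, dotProduct, Fin.sum_univ_four, smul_smul, ← sq, ← pow_mul]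

theorem vecMulVec_projectionColumn (h₀ : StarSMulCommAt c (z 0)) (h₁ : StarSMulCommAt c (z 1)) :
    Matrix.vecMulVec (projectionColumn c z) (star (projectionColumn c z)) =
      !![c ^ 4 • (star (z 0) * z 0), c ^ 3 • (star (z 0) * star (z 1)),
          c ^ 2 • (star (z 0) * star (z 2)), c ^ 2 • (star (z 0) * z 3);
        c ^ 3 • (z 1 * z 0), c ^ 2 • (z 1 * star (z 1)), c • (z 1 * star (z 2)), c • (z 1 * z 3);
        c ^ 2 • (z 2 * z 0), c • (z 2 * star (z 1)), z 2 * star (z 2), z 2 * z 3;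
        c ^ 2 • (star (z 3) * z 0), c • (star (z 3) * star (z 1)), star (z 3) * star (z 2),
          star (z 3) * z 3] := by
  rw [star_projectionColumn h₀ h₁]
  ext i j
  fin_cases i <;> fin_cases j <;>
    simp [projectionColumn, Matrix.vecMulVec_apply, smul_smul, ← pow_succ, ← pow_succ', ← sq,
      ← pow_mul]

end ProjectionColumn

namespace VSRel

variable {A : Type*} [Ring A] [StarRing A] [Algebra ℂ A] {q : ℝ} {z : Fin 4 → A}

theorem starSMulCommAt_mul_star (h : VSRel q z) {i j : Fin 4} (hij : i ≠ j) :
    StarSMulCommAt (q : ℂ) (z i * star (z j)) := by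
  obtain ⟨-, star_mul_eq, -, -⟩ := h
  calc star ((q : ℂ) • (z i * star (z j))) = star (z i) * z j := by
        rw [← star_mul_eq i j hij, star_mul, star_star]
    _ = (q : ℂ) • star (z i * star (z j)) := by
        rw [star_mul_eq j i hij.symm, star_mul, star_star]

theorem star_mul_self_last (h : VSRel q z) :
    star (z 3) * z 3 = (q : ℂ) ^ 2 • (z 3 * star (z 3)) + (1 - (q : ℂ) ^ 2) • 1 := by
  obtain ⟨-, -, star_mul_self, sum_eq_one⟩ := h
  have sum_init : ∑ j ∈ Finset.Iio 3, z j * star (z j) = 1 - z 3 * star (z 3) := by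
    rw [← sum_eq_one, Fin.sum_univ_castSucc]
    exact (sum_Iio_last _).trans (add_sub_cancel_right _ _).symm
  rw [star_mul_self, sum_init]
  module

theorem starSMulCommAt_of_lt_last (h : VSRel q z) {i : Fin 4} (hi : i < 3) :
    StarSMulCommAt (q : ℂ) (z i) := by
  have mul_relation : (1 - (q : ℂ) ^ 2) • z i =
      z i * star (z 3) * z 3 - (q : ℂ) ^ 2 • (z i * z 3 * star (z 3)) := by
    rw [mul_assoc, h.star_mul_self_last, mul_add, mul_smul_comm, mul_smul_comm, mul_one, mul_assoc,
      add_sub_cancel_left]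
  have mul_mul_star : StarSMulCommAt (q : ℂ) (z i * z 3 * star (z 3)) := by
    rw [h.1 i 3 hi, smul_mul_assoc, mul_assoc]
    exact ((h.starSMulCommAt_mul_star hi.ne).mul_left _).smul _
  apply StarSMulCommAt.of_one_sub_sq_smul
  rw [mul_relation]
  exact ((h.starSMulCommAt_mul_star hi.ne).mul_right _).sub (mul_mul_star.smul _)

theorem sum_pow_smul_star_mul_self (h : VSRel q z) :
    (q : ℂ) ^ 4 • (star (z 0) * z 0) + (q : ℂ) ^ 2 • (star (z 1) * z 1) + star (z 2) * z 2 =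
      z 0 * star (z 0) + z 1 * star (z 1) + z 2 * star (z 2) := by
  have telescoped := sum_pow_rev_smul_eq_sum ((q : ℂ) ^ 2)
    (x := fun k : Fin 3 => z k.castSucc * star (z k.castSucc))
    (y := fun k => star (z k.castSucc) * z k.castSucc)
    fun k => by rw [h.2.2.1, Fin.sum_Iio_castSucc]
  simpa [Fin.sum_univ_three, Fin.rev, ← pow_mul] using telescoped

theorem isStarProjection_vecMulVec_projectionColumn (h : VSRel q z) :
    IsStarProjection (Matrix.vecMulVec (projectionColumn (q : ℂ) z)
      (star (projectionColumn (q : ℂ) z))) := by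
  have star_mul_self_zero : star (z 0) * z 0 = z 0 * star (z 0) := by
    rw [h.2.2.1, ← bot_eq_zero, Finset.Iio_bot, Finset.sum_empty, smul_zero, add_zero]
  apply isStarProjection_vecMulVec_star
  rw [star_projectionColumn_dotProduct_self (h.starSMulCommAt_of_lt_last (by decide))
    (h.starSMulCommAt_of_lt_last (by decide)), ← star_mul_self_zero, h.sum_pow_smul_star_mul_self,
    ← Fin.sum_univ_four fun k => z k * star (z k), h.2.2.2]

end VSRel

theorem P1_isProjection_general {A : Type*} [Ring A] [Algebra ℂ A] [StarRing A]
    (q : ℝ) (z₁ z₂ z₃ z₄ : A)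
    (hVS : VSRel q ![z₁, z₂, z₃, z₄]) :
    ∀ P₁ : Matrix (Fin 4) (Fin 4) A,
      P₁ = !![((q : ℂ) ^ 4) • (star z₁ * z₁), ((q : ℂ) ^ 3) • (star z₁ * star z₂),
              ((q : ℂ) ^ 2) • (star z₁ * star z₃), ((q : ℂ) ^ 2) • (star z₁ * z₄);
            ((q : ℂ) ^ 3) • (z₂ * z₁), ((q : ℂ) ^ 2) • (z₂ * star z₂),
              (q : ℂ) • (z₂ * star z₃), (q : ℂ) • (z₂ * z₄);
            ((q : ℂ) ^ 2) • (z₃ * z₁), (q : ℂ) • (z₃ * star z₂),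
              z₃ * star z₃, z₃ * z₄;
            ((q : ℂ) ^ 2) • (star z₄ * z₁), (q : ℂ) • (star z₄ * star z₂),
              star z₄ * star z₃, star z₄ * z₄] →
      P₁ * P₁ = P₁ ∧ Matrix.conjTranspose P₁ = P₁ := by
  rintro P₁ rfl
  have projection := hVS.isStarProjection_vecMulVec_projectionColumn
  rw [vecMulVec_projectionColumn (hVS.starSMulCommAt_of_lt_last (by decide))
    (hVS.starSMulCommAt_of_lt_last (by decide))] at projection
  exact ⟨projection.isIdempotentElem, projection.isSelfAdjoint⟩

/-- The explicit 4×4 matrix `P₁` over the quantum 7-sphere algebra is a projection. -/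
theorem P1_isProjection {A : Type*} [Ring A] [Algebra ℂ A] [StarRing A]
    (q : ℝ) (hq : q ∈ Set.Ioo (0 : ℝ) 1) (z₁ z₂ z₃ z₄ : A)
    (hVS : VSRel q ![z₁, z₂, z₃, z₄]) :
    ∀ P₁ : Matrix (Fin 4) (Fin 4) A,
      P₁ = !![((q : ℂ) ^ 4) • (star z₁ * z₁), ((q : ℂ) ^ 3) • (star z₁ * star z₂),
              ((q : ℂ) ^ 2) • (star z₁ * star z₃), ((q : ℂ) ^ 2) • (star z₁ * z₄);
            ((q : ℂ) ^ 3) • (z₂ * z₁), ((q : ℂ) ^ 2) • (z₂ * star z₂),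
              (q : ℂ) • (z₂ * star z₃), (q : ℂ) • (z₂ * z₄);
            ((q : ℂ) ^ 2) • (z₃ * z₁), (q : ℂ) • (z₃ * star z₂),
              z₃ * star z₃, z₃ * z₄;
            ((q : ℂ) ^ 2) • (star z₄ * z₁), (q : ℂ) • (star z₄ * star z₂),
              star z₄ * star z₃, star z₄ * z₄] →
      P₁ * P₁ = P₁ ∧ Matrix.conjTranspose P₁ = P₁ :=
  P1_isProjection_general q z₁ z₂ z₃ z₄ hVS
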